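/- Let (▷,σ) be a cocycle datum for a Hopf algebra H on an algebra B. Then the product on the vector space B⊗B⊗H given by (b⊗b'⊗h)(c⊗c'⊗g) = b(h_{(1)}▷c)σ(h_{(2)},g_{(1)}) ⊗ c'(S(g_{(4)})▷b')σ(S(g_{(3)}),S(h_{(4)})) ⊗ h_{(3)}g_{(2)} is associative with unit 1⊗1⊗1; moreover s(b) := b⊗1⊗1 defines an algebra map B → B⊗B⊗H, t(b) := 1⊗b⊗1 defines an algebra map from the opposite algebra B^{op} (i.e. t(bc) = t(c)t(b)), the images of s and t commute, and η(b⊗c) := b⊗c⊗1 is an algebra map B⊗B^{op} → B⊗B⊗H. -/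

import Mathlib

/-!
The product on `B ⊗ B ⊗ H` is recognised as the multiplication of an honest associative algebra
by embedding it in one.

Let `P = B ⊗ H`. For `b ∈ B` let `L b` be left multiplication by `b ⊗ 1` on `P`, and for `h ∈ H`
let `U h (c ⊗ g) = (h₁ ▷ c) σ(h₂, g₁) ⊗ h₃ g₂` be left multiplication by `1 # h` in the cocycle
cross product. The cocycle datum gives, in `End P`,
* `U h ∘ L c = L (h₁ ▷ c) ∘ U h₂` (`crossU_mul_lm`, the measuring axiom),
* `U h ∘ U g = L (σ(h₁, g₁)) ∘ U (h₂ g₂)` (`crossU_mul_crossU`), and `U 1 = 1`.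

For the second relation both sides are moved past `L d` by the same rule (twisted associativity of
the action together with invertibility of `σ`), so they agree as soon as they agree on the vectors
`1 ⊗ f`; there the relation is the 2-cocycle identity.

In `End P ⊗ (End P)ᵒᵖ` put `ℓ b = L b ⊗ 1`, `u h = U h ⊗ 1`, `r b = 1 ⊗ L b`, `v h = 1 ⊗ U (S h)`,
and let `Φ (b ⊗ b' ⊗ h) = ℓ b · u h₁ · v h₂ · r b'` (`emb`). As `S` reverses products and
coproducts, `v` and `r` satisfy the mirrored relations, and `Φ` turns the given product into
multiplication (`core_mul`, `emb_mult`). Evaluating at `1 ⊗ 1` and using the counit gives a left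
inverse of `Φ` (`embInv_emb`). Since `Φ (b ⊗ b' ⊗ 1) = ℓ b · r b'`, every claim follows from the
injectivity of `Φ`.

Sweedler calculus is done with convolution algebras `WithConv (C →ₗ[k] R)` for `C = H`, `H ⊗ H`
and `H ⊗ H ⊗ H`, where coassociativity is associativity of the convolution product; explicit
Sweedler sums are written `sw k h fun a b => F a b`, meaning `F(h₁, h₂)` summed.
-/

open scoped TensorProduct
open Coalgebra

noncomputable section

section SweedlerDefs

variable (k : Type*) [Field k]
variable (H : Type*) [Ring H] [Bialgebra k H]

/-- Left-nested triple comultiplication `h ↦ (h₍₁₎ ⊗ h₍₂₎) ⊗ h₍₃₎`. -/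
def Δ3 : H →ₗ[k] (H ⊗[k] H) ⊗[k] H :=
  (LinearMap.rTensor H (Coalgebra.comul (R := k) (A := H))) ∘ₗ Coalgebra.comul

/-- Left-nested fourfold comultiplication. -/
def Δ4 : H →ₗ[k] ((H ⊗[k] H) ⊗[k] H) ⊗[k] H :=
  (LinearMap.rTensor H (Δ3 k H)) ∘ₗ Coalgebra.comul

/-- Left-nested fivefold comultiplication. -/
def Δ5 : H →ₗ[k] (((H ⊗[k] H) ⊗[k] H) ⊗[k] H) ⊗[k] H :=
  (LinearMap.rTensor H (Δ4 k H)) ∘ₗ Coalgebra.comul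

/-- Left-nested sixfold comultiplication. -/
def Δ6 : H →ₗ[k] ((((H ⊗[k] H) ⊗[k] H) ⊗[k] H) ⊗[k] H) ⊗[k] H :=
  (LinearMap.rTensor H (Δ5 k H)) ∘ₗ Coalgebra.comul

/-- `IsRep2 k H h h1 h2` says that `Δh = ∑ᵢ h1 i ⊗ h2 i`, i.e. the families `h1, h2`
realise the Sweedler legs `h₍₁₎ ⊗ h₍₂₎`. -/
def IsRep2 {n : ℕ} (h : H) (h1 h2 : Fin n → H) : Prop :=
  Coalgebra.comul (R := k) h = ∑ i, h1 i ⊗ₜ[k] h2 i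

/-- A representation of the Sweedler legs `h₍₁₎ ⊗ h₍₂₎ ⊗ h₍₃₎`. -/
def IsRep3 {n : ℕ} (h : H) (h1 h2 h3 : Fin n → H) : Prop :=
  Δ3 k H h = ∑ i, (h1 i ⊗ₜ[k] h2 i) ⊗ₜ[k] h3 i

/-- A representation of the Sweedler legs `h₍₁₎ ⊗ h₍₂₎ ⊗ h₍₃₎ ⊗ h₍₄₎`. -/
def IsRep4 {n : ℕ} (h : H) (h1 h2 h3 h4 : Fin n → H) : Prop :=
  Δ4 k H h = ∑ i, ((h1 i ⊗ₜ[k] h2 i) ⊗ₜ[k] h3 i) ⊗ₜ[k] h4 i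

/-- A representation of the Sweedler legs `h₍₁₎ ⊗ ⋯ ⊗ h₍₅₎`. -/
def IsRep5 {n : ℕ} (h : H) (h1 h2 h3 h4 h5 : Fin n → H) : Prop :=
  Δ5 k H h = ∑ i, (((h1 i ⊗ₜ[k] h2 i) ⊗ₜ[k] h3 i) ⊗ₜ[k] h4 i) ⊗ₜ[k] h5 i

/-- A representation of the Sweedler legs `h₍₁₎ ⊗ ⋯ ⊗ h₍₆₎`. -/
def IsRep6 {n : ℕ} (h : H) (h1 h2 h3 h4 h5 h6 : Fin n → H) : Prop :=
  Δ6 k H h = ∑ i, ((((h1 i ⊗ₜ[k] h2 i) ⊗ₜ[k] h3 i) ⊗ₜ[k] h4 i) ⊗ₜ[k] h5 i) ⊗ₜ[k] h6 i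

/-- A Drinfeld 2-cocycle `χ : H ⊗ H → k` with convolution inverse `χi`. -/
structure DrinfeldCocycle (χ χi : H →ₗ[k] H →ₗ[k] k) : Prop where
  conv_left : ∀ (h g : H) {n m : ℕ} (h1 h2 : Fin n → H) (g1 g2 : Fin m → H),
    IsRep2 k H h h1 h2 → IsRep2 k H g g1 g2 →
    ∑ i, ∑ j, χ (h1 i) (g1 j) * χi (h2 i) (g2 j)
      = Coalgebra.counit (R := k) h * Coalgebra.counit (R := k) g
  conv_right : ∀ (h g : H) {n m : ℕ} (h1 h2 : Fin n → H) (g1 g2 : Fin m → H),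
    IsRep2 k H h h1 h2 → IsRep2 k H g g1 g2 →
    ∑ i, ∑ j, χi (h1 i) (g1 j) * χ (h2 i) (g2 j)
      = Coalgebra.counit (R := k) h * Coalgebra.counit (R := k) g
  cocycle : ∀ (h g f : H) {n m p : ℕ} (h1 h2 : Fin n → H) (g1 g2 : Fin m → H)
      (f1 f2 : Fin p → H),
    IsRep2 k H h h1 h2 → IsRep2 k H g g1 g2 → IsRep2 k H f f1 f2 →
    ∑ j, ∑ l, χ (g1 j) (f1 l) * χ h (g2 j * f2 l)
      = ∑ i, ∑ j, χ (h1 i) (g1 j) * χ (h2 i * g2 j) f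
  one_cocy : ∀ h : H, χ 1 h = Coalgebra.counit (R := k) h
  cocy_one : ∀ h : H, χ h 1 = Coalgebra.counit (R := k) h

/-- The twisted product `h • g = χ(h₍₁₎,g₍₁₎) h₍₂₎g₍₂₎ χ⁻¹(h₍₃₎,g₍₃₎)` of the Drinfeld
cotwist `H^χ`, given as a bilinear map `tmul`. -/
def IsTwistedMul (χ χi : H →ₗ[k] H →ₗ[k] k) (tmul : H →ₗ[k] H →ₗ[k] H) : Prop :=
  ∀ (h g : H) {n m : ℕ} (h1 h2 h3 : Fin n → H) (g1 g2 g3 : Fin m → H),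
    IsRep3 k H h h1 h2 h3 → IsRep3 k H g g1 g2 g3 →
    tmul h g = ∑ i, ∑ j, (χ (h1 i) (g1 j) * χi (h3 i) (g3 j)) • (h2 i * g2 j)

/-- A coquasitriangular structure `r` on `H`, with convolution inverse `ri`. -/
structure Coquasitriangular (r ri : H →ₗ[k] H →ₗ[k] k) : Prop where
  conv_left : ∀ (h g : H) {n m : ℕ} (h1 h2 : Fin n → H) (g1 g2 : Fin m → H),
    IsRep2 k H h h1 h2 → IsRep2 k H g g1 g2 →
    ∑ i, ∑ j, r (h1 i) (g1 j) * ri (h2 i) (g2 j)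
      = Coalgebra.counit (R := k) h * Coalgebra.counit (R := k) g
  conv_right : ∀ (h g : H) {n m : ℕ} (h1 h2 : Fin n → H) (g1 g2 : Fin m → H),
    IsRep2 k H h h1 h2 → IsRep2 k H g g1 g2 →
    ∑ i, ∑ j, ri (h1 i) (g1 j) * r (h2 i) (g2 j)
      = Coalgebra.counit (R := k) h * Coalgebra.counit (R := k) g
  braid : ∀ (h g : H) {n m : ℕ} (h1 h2 : Fin n → H) (g1 g2 : Fin m → H),
    IsRep2 k H h h1 h2 → IsRep2 k H g g1 g2 →
    ∑ i, ∑ j, r (h2 i) (g2 j) • (g1 j * h1 i) = ∑ i, ∑ j, r (h1 i) (g1 j) • (h2 i * g2 j)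
  mul_right : ∀ (h g f : H) {n : ℕ} (h1 h2 : Fin n → H), IsRep2 k H h h1 h2 →
    r h (g * f) = ∑ i, r (h1 i) g * r (h2 i) f
  mul_left : ∀ (h g f : H) {n : ℕ} (f1 f2 : Fin n → H), IsRep2 k H f f1 f2 →
    r (h * g) f = ∑ i, r h (f1 i) * r g (f2 i)

variable (B : Type*) [Ring B] [Algebra k B]

/-- `u, ui : H → B` are convolution inverses of each other. -/
def ConvInv (u ui : H →ₗ[k] B) : Prop :=
  ∀ (h : H) {n : ℕ} (h1 h2 : Fin n → H), IsRep2 k H h h1 h2 →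
    ∑ i, u (h1 i) * ui (h2 i) = Coalgebra.counit (R := k) h • (1 : B)
    ∧ ∑ i, ui (h1 i) * u (h2 i) = Coalgebra.counit (R := k) h • (1 : B)

/-- A measuring of `H` on `B`:  `h ▷ (ab) = (h₍₁₎ ▷ a)(h₍₂₎ ▷ b)` and `h ▷ 1 = ε(h)1`. -/
structure Measuring (act : H →ₗ[k] B →ₗ[k] B) : Prop where
  act_mul : ∀ (h : H) (a b : B) {n : ℕ} (h1 h2 : Fin n → H),
    IsRep2 k H h h1 h2 → act h (a * b) = ∑ i, act (h1 i) a * act (h2 i) b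
  act_one : ∀ h : H, act h 1 = Coalgebra.counit (R := k) h • (1 : B)

/-- A cocycle datum `(▷, σ)` (with chosen convolution inverse `σi` of `σ`). -/
structure CocycleDatum (act : H →ₗ[k] B →ₗ[k] B) (σ σi : H →ₗ[k] H →ₗ[k] B) : Prop where
  toMeasuring : Measuring k H B act
  conv_left : ∀ (h g : H) {n m : ℕ} (h1 h2 : Fin n → H) (g1 g2 : Fin m → H),
    IsRep2 k H h h1 h2 → IsRep2 k H g g1 g2 →
    ∑ i, ∑ j, σ (h1 i) (g1 j) * σi (h2 i) (g2 j)
      = (Coalgebra.counit (R := k) h * Coalgebra.counit (R := k) g) • (1 : B)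
  conv_right : ∀ (h g : H) {n m : ℕ} (h1 h2 : Fin n → H) (g1 g2 : Fin m → H),
    IsRep2 k H h h1 h2 → IsRep2 k H g g1 g2 →
    ∑ i, ∑ j, σi (h1 i) (g1 j) * σ (h2 i) (g2 j)
      = (Coalgebra.counit (R := k) h * Coalgebra.counit (R := k) g) • (1 : B)
  one_act : ∀ b : B, act 1 b = b
  act_act : ∀ (h g : H) (b : B) {n m : ℕ} (h1 h2 h3 : Fin n → H) (g1 g2 g3 : Fin m → H),
    IsRep3 k H h h1 h2 h3 → IsRep3 k H g g1 g2 g3 →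
    act h (act g b) = ∑ i, ∑ j, σ (h1 i) (g1 j) * act (h2 i * g2 j) b * σi (h3 i) (g3 j)
  sigma_one : ∀ h : H, σ h 1 = Coalgebra.counit (R := k) h • (1 : B)
  one_sigma : ∀ h : H, σ 1 h = Coalgebra.counit (R := k) h • (1 : B)
  cocycle : ∀ (h g f : H) {n m p : ℕ} (h1 h2 : Fin n → H) (g1 g2 : Fin m → H)
      (f1 f2 : Fin p → H),
    IsRep2 k H h h1 h2 → IsRep2 k H g g1 g2 → IsRep2 k H f f1 f2 →
    ∑ i, ∑ j, ∑ l, act (h1 i) (σ (g1 j) (f1 l)) * σ (h2 i) (g2 j * f2 l)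
      = ∑ i, ∑ j, σ (h1 i) (g1 j) * σ (h2 i * g2 j) f

/-- The cocycle cross product multiplication on `P = B ⊗ H`:
`(b#h)(c#g) = b(h₍₁₎▷c)σ(h₍₂₎,g₍₁₎) # h₍₃₎g₍₂₎`, given as a bilinear map `mult`. -/
def IsCrossMul (act : H →ₗ[k] B →ₗ[k] B) (σ : H →ₗ[k] H →ₗ[k] B)
    (mult : B ⊗[k] H →ₗ[k] B ⊗[k] H →ₗ[k] B ⊗[k] H) : Prop :=
  ∀ (b c : B) (h g : H) {n m : ℕ} (h1 h2 h3 : Fin n → H) (g1 g2 : Fin m → H),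
    IsRep3 k H h h1 h2 h3 → IsRep2 k H g g1 g2 →
    mult (b ⊗ₜ[k] h) (c ⊗ₜ[k] g)
      = ∑ i, ∑ j, (b * act (h1 i) c * σ (h2 i) (g1 j)) ⊗ₜ[k] (h3 i * g2 j)

end SweedlerDefs

section HopfDefs

variable (k : Type*) [Field k]
variable (H : Type*) [Ring H] [HopfAlgebra k H]
variable (B : Type*) [Ring B] [Algebra k B]

/-- The cocycle Hopf algebroid multiplication on `B ⊗ B ⊗ H`:
`(b⊗b'⊗h)(c⊗c'⊗g) = b(h₍₁₎▷c)σ(h₍₂₎,g₍₁₎) ⊗ c'(S(g₍₄₎)▷b')σ(S(g₍₃₎),S(h₍₄₎)) ⊗ h₍₃₎g₍₂₎`,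
given as a bilinear map `mult`. -/
def IsAlgebroidMul (act : H →ₗ[k] B →ₗ[k] B) (σ : H →ₗ[k] H →ₗ[k] B)
    (mult : B ⊗[k] (B ⊗[k] H) →ₗ[k] B ⊗[k] (B ⊗[k] H) →ₗ[k] B ⊗[k] (B ⊗[k] H)) : Prop :=
  ∀ (b b' c c' : B) (h g : H) {n m : ℕ}
    (h1 h2 h3 h4 : Fin n → H) (g1 g2 g3 g4 : Fin m → H),
    IsRep4 k H h h1 h2 h3 h4 → IsRep4 k H g g1 g2 g3 g4 →
    mult (b ⊗ₜ[k] (b' ⊗ₜ[k] h)) (c ⊗ₜ[k] (c' ⊗ₜ[k] g))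
      = ∑ i, ∑ j, (b * act (h1 i) c * σ (h2 i) (g1 j)) ⊗ₜ[k]
          ((c' * act (HopfAlgebra.antipode (R := k) (g4 j)) b'
              * σ (HopfAlgebra.antipode (R := k) (g3 j))
                  (HopfAlgebra.antipode (R := k) (h4 i))) ⊗ₜ[k] (h3 i * g2 j))

end HopfDefs


/-! ### Sweedler sums and convolution -/

open WithConv

section Sweedler

variable {k : Type*} [Field k] {H : Type*} [Ring H] [Bialgebra k H]

theorem exists_rep2 (k : Type*) [Field k] {H : Type*} [Ring H] [Bialgebra k H] (h : H) :
    ∃ (n : ℕ) (h1 h2 : Fin n → H), IsRep2 k H h h1 h2 := by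
  let e := (Coalgebra.Repr.arbitrary k h).index.equivFin
  refine ⟨_, fun i => (e.symm i).1.1, fun i => (e.symm i).1.2, ?_⟩
  rw [IsRep2, ← (Coalgebra.Repr.arbitrary k h).eq]
  rw [e.symm.sum_comp (fun x => x.1.1 ⊗ₜ[k] x.1.2),
    Finset.sum_coe_sort _ (fun x : H × H => x.1 ⊗ₜ[k] x.2)]
  rfl

/-- The number of summands in a chosen expression of `Δ h` as a sum of pure tensors. -/
def swN (k : Type*) [Field k] {H : Type*} [Ring H] [Bialgebra k H] (h : H) : ℕ :=
  (exists_rep2 k h).choose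

/-- The left legs of the chosen expression of `Δ h`. -/
def swL (k : Type*) [Field k] {H : Type*} [Ring H] [Bialgebra k H] (h : H) : Fin (swN k h) → H :=
  (exists_rep2 k h).choose_spec.choose

/-- The right legs of the chosen expression of `Δ h`. -/
def swR (k : Type*) [Field k] {H : Type*} [Ring H] [Bialgebra k H] (h : H) : Fin (swN k h) → H :=
  (exists_rep2 k h).choose_spec.choose_spec.choose

theorem sw_isRep2 (h : H) : IsRep2 k H h (swL k h) (swR k h) :=
  (exists_rep2 k h).choose_spec.choose_spec.choose_spec

/-- The Sweedler sum `F(h₁, h₂)`, for a chosen expression of `Δ h`. It is independent of that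
choice when `F` is bilinear; `F` is an arbitrary function here so that sums can be nested freely. -/
def sw (k : Type*) [Field k] {H : Type*} [Ring H] [Bialgebra k H] {M : Type*} [AddCommMonoid M]
    (h : H) (F : H → H → M) : M :=
  ∑ i, F (swL k h i) (swR k h i)

variable {M M' : Type*} [AddCommMonoid M] [AddCommMonoid M']

theorem comul_eq_sw (h : H) : Coalgebra.comul (R := k) h = sw k h fun a b => a ⊗ₜ[k] b :=
  sw_isRep2 h

theorem map_sw {G : Type*} [FunLike G M M'] [AddMonoidHomClass G M M'] (f : G)
    (h : H) (F : H → H → M) : f (sw k h F) = sw k h fun a b => f (F a b) :=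
  map_sum f _ _

theorem sw_congr {h : H} {F G : H → H → M} (hFG : ∀ a b, F a b = G a b) :
    sw k h F = sw k h G :=
  Finset.sum_congr rfl fun _ _ => hFG _ _

theorem sw_comm (h g : H) (F : H → H → H → H → M) :
    (sw k h fun a b => sw k g fun c d => F a b c d) =
      sw k g fun c d => sw k h fun a b => F a b c d :=
  Finset.sum_comm

theorem sw_counit_left [Module k M] (f : H →ₗ[k] M) (h : H) :
    (sw k h fun a b => Coalgebra.counit (R := k) a • f b) = f h := by
  have := congrArg ((TensorProduct.lid k M).toLinearMap ∘ₗ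
    TensorProduct.map (Coalgebra.counit (R := k)) f)
    (comul_eq_sw (k := k) h)
  rw [map_sw] at this
  simp only [LinearMap.comp_apply, LinearEquiv.coe_coe, TensorProduct.map_tmul,
    TensorProduct.lid_tmul] at this
  rw [← this, ← LinearMap.lTensor_comp_rTensor, LinearMap.comp_apply,
    Coalgebra.rTensor_counit_comul]
  simp

theorem sw_counit_right [Module k M] (f : H →ₗ[k] M) (h : H) :
    (sw k h fun a b => Coalgebra.counit (R := k) b • f a) = f h := by
  have := congrArg ((TensorProduct.rid k M).toLinearMap ∘ₗ
    TensorProduct.map f (Coalgebra.counit (R := k)))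
    (comul_eq_sw (k := k) h)
  rw [map_sw] at this
  simp only [LinearMap.comp_apply, LinearEquiv.coe_coe, TensorProduct.map_tmul,
    TensorProduct.rid_tmul] at this
  rw [← this, ← LinearMap.rTensor_comp_lTensor, LinearMap.comp_apply,
    Coalgebra.lTensor_counit_comul]
  simp

/-- Iterating the chosen expressions gives legs for `Δ3`, and sums over these legs are nested
Sweedler sums. -/
theorem exists_rep3 (h : H) : ∃ (n : ℕ) (h1 h2 h3 : Fin n → H), IsRep3 k H h h1 h2 h3 ∧
    ∀ F : H → H → H → M, ∑ i, F (h1 i) (h2 i) (h3 i) =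
      sw k h fun x c => sw k x fun a b => F a b c := by
  let e := Fintype.equivFin ((i : Fin (swN k h)) × Fin (swN k (swL k h i)))
  refine ⟨_, fun i => swL k _ (e.symm i).2, fun i => swR k _ (e.symm i).2,
    fun i => swR k _ (e.symm i).1, ?_, fun F => ?_⟩
  · rw [IsRep3, e.symm.sum_comp (fun x => (swL k _ x.2 ⊗ₜ[k] swR k _ x.2) ⊗ₜ[k] swR k _ x.1),
      Fintype.sum_sigma, Δ3, LinearMap.comp_apply, comul_eq_sw, map_sw]
    simp only [LinearMap.rTensor_tmul, comul_eq_sw, sw, TensorProduct.sum_tmul]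
  · rw [e.symm.sum_comp (fun x => F (swL k _ x.2) (swR k _ x.2) (swR k _ x.1)), Fintype.sum_sigma]
    rfl

theorem exists_rep4 (h : H) : ∃ (n : ℕ) (h1 h2 h3 h4 : Fin n → H), IsRep4 k H h h1 h2 h3 h4 ∧
    ∀ F : H → H → H → H → M, ∑ i, F (h1 i) (h2 i) (h3 i) (h4 i) =
      sw k h fun y d => sw k y fun x c => sw k x fun a b => F a b c d := by
  let e := Fintype.equivFin ((i : Fin (swN k h)) × (j : Fin (swN k (swL k h i))) ×
    Fin (swN k (swL k (swL k h i) j)))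
  refine ⟨_, fun i => swL k _ (e.symm i).2.2, fun i => swR k _ (e.symm i).2.2,
    fun i => swR k _ (e.symm i).2.1, fun i => swR k _ (e.symm i).1, ?_, fun F => ?_⟩
  · rw [IsRep4, e.symm.sum_comp (fun x => ((swL k _ x.2.2 ⊗ₜ[k] swR k _ x.2.2) ⊗ₜ[k]
        swR k _ x.2.1) ⊗ₜ[k] swR k _ x.1),
      Fintype.sum_sigma, Δ4, LinearMap.comp_apply, comul_eq_sw, map_sw]
    simp only [LinearMap.rTensor_tmul, Δ3, LinearMap.comp_apply, comul_eq_sw, map_sw,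
      Fintype.sum_sigma]
    simp only [sw, TensorProduct.sum_tmul]
  · rw [e.symm.sum_comp (fun x => F (swL k _ x.2.2) (swR k _ x.2.2) (swR k _ x.2.1) (swR k _ x.1)),
      Fintype.sum_sigma]
    simp only [Fintype.sum_sigma]
    rfl

variable {R : Type*} [Ring R]

theorem mul_sw (x : R) (h : H) (F : H → H → R) : x * sw k h F = sw k h fun a b => x * F a b :=
  Finset.mul_sum _ _ _

theorem sw_mul (x : R) (h : H) (F : H → H → R) : sw k h F * x = sw k h fun a b => F a b * x :=
  Finset.sum_mul _ _ _

variable [Algebra k R]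

theorem conv_apply (X Y : WithConv (H →ₗ[k] R)) (h : H) :
    (X * Y) h = sw k h fun a b => X a * Y b := by
  rw [LinearMap.convMul_apply, comul_eq_sw, map_sw, map_sw]
  rfl

theorem comul_tmul_sw {K : Type*} [AddCommGroup K] [Module k K] [Coalgebra k K] (h : H) (y : K) :
    Coalgebra.comul (R := k) (h ⊗ₜ[k] y) = sw k h fun a b =>
      TensorProduct.map (TensorProduct.mk k H K a) (TensorProduct.mk k H K b)
        (Coalgebra.comul (R := k) y) := by
  rw [TensorProduct.comul_tmul, comul_eq_sw]
  simp only [sw, TensorProduct.sum_tmul, map_sum]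
  refine Finset.sum_congr rfl fun i _ => ?_
  induction Coalgebra.comul (R := k) y with
  | zero => simp
  | tmul c d => simp
  | add x y hx hy => rw [TensorProduct.tmul_add, map_add, map_add, hx, hy]

theorem conv_apply₂ (X Y : WithConv (H ⊗[k] H →ₗ[k] R)) (h g : H) :
    (X * Y) (h ⊗ₜ[k] g) = sw k h fun a b => sw k g fun c d =>
      X (a ⊗ₜ[k] c) * Y (b ⊗ₜ[k] d) := by
  rw [LinearMap.convMul_apply, comul_tmul_sw, comul_eq_sw]
  simp [map_sw]

theorem conv_apply₃ (X Y : WithConv (H ⊗[k] (H ⊗[k] H) →ₗ[k] R)) (h g f : H) :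
    (X * Y) (h ⊗ₜ[k] (g ⊗ₜ[k] f)) =
      sw k h fun a b => sw k g fun c d => sw k f fun p q =>
      X (a ⊗ₜ[k] (c ⊗ₜ[k] p)) * Y (b ⊗ₜ[k] (d ⊗ₜ[k] q)) := by
  rw [LinearMap.convMul_apply, comul_tmul_sw, comul_tmul_sw, comul_eq_sw]
  simp only [map_sw, TensorProduct.map_tmul, TensorProduct.mk_apply, LinearMap.mul'_apply]

theorem comul_mul_sw (h g : H) : Coalgebra.comul (R := k) (h * g) =
    sw k h fun a b => sw k g fun c d => (a * c) ⊗ₜ[k] (b * d) := by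
  rw [Bialgebra.comul_mul, comul_eq_sw, comul_eq_sw g, sw_mul]
  simp only [mul_sw, Algebra.TensorProduct.tmul_mul_tmul]

theorem conv_apply_mul (X Y : WithConv (H →ₗ[k] R)) (h g : H) :
    (X * Y) (h * g) = sw k h fun a b => sw k g fun c d => X (a * c) * Y (b * d) := by
  rw [LinearMap.convMul_apply, comul_mul_sw]
  simp [map_sw]

theorem conv_apply_mul_tmul (X Y : WithConv (H ⊗[k] H →ₗ[k] R)) (h g f : H) :
    (X * Y) ((h * g) ⊗ₜ[k] f) = sw k h fun a b => sw k g fun c d => sw k f fun p q =>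
      X ((a * c) ⊗ₜ[k] p) * Y ((b * d) ⊗ₜ[k] q) := by
  rw [LinearMap.convMul_apply, TensorProduct.comul_tmul, comul_mul_sw, comul_eq_sw f]
  simp only [sw, TensorProduct.sum_tmul, TensorProduct.tmul_sum, map_sum,
    TensorProduct.AlgebraTensorModule.tensorTensorTensorComm_tmul, TensorProduct.map_tmul,
    LinearMap.mul'_apply]
  rw [Finset.sum_comm]
  exact Finset.sum_congr rfl fun i _ => Finset.sum_comm

theorem conv_apply_tmul_mul (X Y : WithConv (H ⊗[k] H →ₗ[k] R)) (h g f : H) :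
    (X * Y) (h ⊗ₜ[k] (g * f)) = sw k h fun a b => sw k g fun c d => sw k f fun p q =>
      X (a ⊗ₜ[k] (c * p)) * Y (b ⊗ₜ[k] (d * q)) := by
  rw [LinearMap.convMul_apply, comul_tmul_sw, comul_mul_sw]
  simp [map_sw]

/-! ### Maps pulled back to `H ⊗ H` -/

/-- The map `c ↦ ε(c) x`. -/
def cst {C : Type*} [AddCommGroup C] [Module k C] [Coalgebra k C] (x : R) :
    WithConv (C →ₗ[k] R) :=
  toConv (LinearMap.toSpanSingleton k R x ∘ₗ Coalgebra.counit)

/-- The map `h ⊗ g ↦ ε(g) f(h)`. -/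
def fst (f : H →ₗ[k] R) : WithConv (H ⊗[k] H →ₗ[k] R) :=
  toConv (f ∘ₗ (TensorProduct.rid k H).toLinearMap ∘ₗ (Coalgebra.counit (R := k)).lTensor H)

/-- The map `h ⊗ g ↦ ε(h) f(g)`. -/
def snd (f : H →ₗ[k] R) : WithConv (H ⊗[k] H →ₗ[k] R) :=
  toConv (f ∘ₗ (TensorProduct.lid k H).toLinearMap ∘ₗ (Coalgebra.counit (R := k)).rTensor H)

/-- The map `h ⊗ g ↦ f(h g)`; pullback along a coalgebra map, hence multiplicative for
convolution. -/
def viaMul (f : H →ₗ[k] R) : WithConv (H ⊗[k] H →ₗ[k] R) :=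
  toConv (f ∘ₗ LinearMap.mul' k H)

@[simp] theorem fst_apply (f : H →ₗ[k] R) (h g : H) :
    fst f (h ⊗ₜ[k] g) = Coalgebra.counit (R := k) g • f h := by simp [fst]

@[simp] theorem snd_apply (f : H →ₗ[k] R) (h g : H) :
    snd f (h ⊗ₜ[k] g) = Coalgebra.counit (R := k) h • f g := by simp [snd]

@[simp] theorem viaMul_apply (f : H →ₗ[k] R) (h g : H) :
    viaMul f (h ⊗ₜ[k] g) = f (h * g) := by simp [viaMul]

theorem conv_ext₂ {X Y : WithConv (H ⊗[k] H →ₗ[k] R)}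
    (hXY : ∀ h g : H, X (h ⊗ₜ[k] g) = Y (h ⊗ₜ[k] g)) : X = Y :=
  WithConv.ext (TensorProduct.ext' hXY)

@[simp] theorem mul_cst_apply {C : Type*} [AddCommGroup C] [Module k C] [Coalgebra k C] (x : R)
    (X : WithConv (C →ₗ[k] R)) (c : C) : (X * (cst x : WithConv (C →ₗ[k] R))) c = X c * x := by
  rw [LinearMap.convMul_apply, cst, ofConv_toConv, ← LinearMap.map_comp_lTensor,
    LinearMap.comp_apply, Coalgebra.lTensor_counit_comul]
  simp

@[simp] theorem cst_mul_apply {C : Type*} [AddCommGroup C] [Module k C] [Coalgebra k C] (x : R)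
    (X : WithConv (C →ₗ[k] R)) (c : C) : ((cst x : WithConv (C →ₗ[k] R)) * X) c = x * X c := by
  rw [LinearMap.convMul_apply, cst, ofConv_toConv, ← LinearMap.map_comp_rTensor,
    LinearMap.comp_apply, Coalgebra.rTensor_counit_comul]
  simp

theorem fst_mul_apply (f : H →ₗ[k] R) (Y : WithConv (H ⊗[k] H →ₗ[k] R)) (h g : H) :
    (fst f * Y) (h ⊗ₜ[k] g) = sw k h fun a b => f a * Y (b ⊗ₜ[k] g) := by
  rw [conv_apply₂]
  congr! with a b
  simpa using sw_counit_left (LinearMap.mulLeft k (f a) ∘ₗ Y.ofConv ∘ₗ TensorProduct.mk k H H b) g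

theorem mul_fst_apply (f : H →ₗ[k] R) (Y : WithConv (H ⊗[k] H →ₗ[k] R)) (h g : H) :
    (Y * fst f) (h ⊗ₜ[k] g) = sw k h fun a b => Y (a ⊗ₜ[k] g) * f b := by
  rw [conv_apply₂]
  congr! with a b
  simpa using sw_counit_right
    (LinearMap.mulRight k (f b) ∘ₗ Y.ofConv ∘ₗ TensorProduct.mk k H H a) g

theorem mul_snd_apply (f : H →ₗ[k] R) (Y : WithConv (H ⊗[k] H →ₗ[k] R)) (h g : H) :
    (Y * snd f) (h ⊗ₜ[k] g) = sw k g fun c d => Y (h ⊗ₜ[k] c) * f d := by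
  rw [conv_apply₂, sw_comm]
  congr! with c d
  simpa using sw_counit_right
    (LinearMap.mulRight k (f d) ∘ₗ Y.ofConv ∘ₗ (TensorProduct.mk k H H).flip c) h

theorem fst_mul_snd_apply (f f' : H →ₗ[k] R) (h g : H) :
    (fst f * snd f') (h ⊗ₜ[k] g) = f h * f' g := by
  rw [fst_mul_apply]
  simpa using sw_counit_right (LinearMap.mulRight k (f' g) ∘ₗ f) h

theorem snd_mul_fst_apply (f f' : H →ₗ[k] R) (h g : H) :
    (snd f * fst f') (h ⊗ₜ[k] g) = f g * f' h := by
  rw [mul_fst_apply]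
  simpa using sw_counit_left (LinearMap.mulLeft k (f g) ∘ₗ f') h

theorem fst_mul_fst (f f' : H →ₗ[k] R) : fst f * fst f' = fst (toConv f * toConv f').ofConv := by
  refine conv_ext₂ fun h g => ?_
  rw [fst_mul_apply, fst_apply, conv_apply, ← LinearMap.lsmul_apply (R := k), map_sw]
  simp

theorem snd_mul_snd (f f' : H →ₗ[k] R) : snd f * snd f' = snd (toConv f * toConv f').ofConv := by
  refine conv_ext₂ fun h g => ?_
  rw [mul_snd_apply, snd_apply, conv_apply, ← LinearMap.lsmul_apply (R := k), map_sw]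
  simp

theorem viaMul_mul_viaMul (f f' : H →ₗ[k] R) :
    viaMul f * viaMul f' = viaMul (toConv f * toConv f').ofConv := by
  refine conv_ext₂ fun h g => ?_
  rw [conv_apply₂, viaMul_apply, conv_apply_mul]
  simp

end Sweedler

/-! ### The antipode, and the abstract multiplication formula -/

section Core

variable {k : Type*} [Field k] {H : Type*} [Ring H] [HopfAlgebra k H]
variable {B : Type*} [Ring B] [Algebra k B] {R : Type*} [Ring R] [Algebra k R]

local notation "𝑺" => HopfAlgebra.antipode k (A := H)

/-- `Δ(S h) = S h₂ ⊗ S h₁`: both sides are convolution inverse to `Δ : H → H ⊗ H`. -/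
theorem comul_antipode_sw (h : H) :
    Coalgebra.comul (R := k) (𝑺 h) = sw k h fun a b => 𝑺 b ⊗ₜ[k] 𝑺 a := by
  let j₁ : H →ₐ[k] H ⊗[k] H := Algebra.TensorProduct.includeLeft
  let j₂ : H →ₐ[k] H ⊗[k] H := Algebra.TensorProduct.includeRight
  have inv (j : H →ₐ[k] H ⊗[k] H) :
      toConv (j.toLinearMap ∘ₗ 𝑺) * toConv j.toLinearMap = 1 := by
    have := LinearMap.algHom_comp_convMul_distrib j (toConv 𝑺) (toConv LinearMap.id)
    rw [LinearMap.antipode_mul_id] at this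
    refine WithConv.ext (this.symm.trans ?_)
    ext x
    simp
  have hδ : toConv (Coalgebra.comul (R := k) (A := H)) =
      toConv j₁.toLinearMap * toConv j₂.toLinearMap := by
    ext x
    simp only [conv_apply]
    rw [comul_eq_sw]
    simp [j₁, j₂]
  have hleft : (toConv (j₂.toLinearMap ∘ₗ 𝑺) * toConv (j₁.toLinearMap ∘ₗ 𝑺)) *
      toConv (Coalgebra.comul (R := k) (A := H)) = 1 := by
    rw [hδ, mul_assoc, ← mul_assoc (toConv (j₁.toLinearMap ∘ₗ 𝑺)), inv, one_mul, inv]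
  have key := left_inv_eq_right_inv hleft LinearMap.comul_right_inv
  have := congrArg (fun X => X.ofConv h) key
  simp only [conv_apply] at this
  rw [LinearMap.comp_apply] at this
  rw [← this]
  simp [j₁, j₂]

theorem conv_apply_antipode (X Y : WithConv (H →ₗ[k] R)) (h : H) :
    (X * Y) (𝑺 h) = sw k h fun a b => X (𝑺 b) * Y (𝑺 a) := by
  rw [LinearMap.convMul_apply, comul_antipode_sw]
  simp [map_sw]

theorem conv_apply_antipode₂ (X Y : WithConv (H ⊗[k] H →ₗ[k] R)) (h g : H) :
    (X * Y) (𝑺 h ⊗ₜ[k] 𝑺 g) = sw k h fun a b => sw k g fun c d =>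
      X (𝑺 b ⊗ₜ[k] 𝑺 d) * Y (𝑺 a ⊗ₜ[k] 𝑺 c) := by
  rw [LinearMap.convMul_apply, TensorProduct.comul_tmul, comul_antipode_sw, comul_antipode_sw]
  simp only [sw, TensorProduct.sum_tmul, TensorProduct.tmul_sum, map_sum,
    TensorProduct.AlgebraTensorModule.tensorTensorTensorComm_tmul, TensorProduct.map_tmul,
    LinearMap.mul'_apply]
  exact Finset.sum_comm

local notation "𝑾" => WithConv (H ⊗[k] H →ₗ[k] R)

/-- In an algebra with elements `ℓ b`, `u h` satisfying the crossed product relations, and commuting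
with them elements `r b`, `v h` satisfying the mirrored relations twisted by the antipode, the
elements `ℓ b · u h₁ · v h₂ · r b'` multiply by the formula of `IsAlgebroidMul`. The computation
takes place in the convolution algebra of maps `H ⊗ H → R`, with `h` and `g` as variables. -/
theorem core_mul (act : H →ₗ[k] B →ₗ[k] B) (σ : H →ₗ[k] H →ₗ[k] B)
    (ℓ r : B →ₗ[k] R) (u v : H →ₗ[k] R)
    (hℓ : ∀ a b, ℓ (a * b) = ℓ a * ℓ b) (hr : ∀ a b, r (a * b) = r b * r a)
    (hu : ∀ h c, u h * ℓ c = sw k h fun a b => ℓ (act a c) * u b)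
    (huu : ∀ h g, u h * u g = sw k h fun a b => sw k g fun c d => ℓ (σ a c) * u (b * d))
    (hv : ∀ g b, r b * v g = sw k g fun c d => v c * r (act (𝑺 d) b))
    (hvv : ∀ h g, v h * v g =
      sw k h fun a b => sw k g fun c d => v (a * c) * r (σ (𝑺 d) (𝑺 b)))
    (hvu : ∀ h g, v h * u g = u g * v h) (hvℓ : ∀ h c, v h * ℓ c = ℓ c * v h)
    (hru : ∀ b g, r b * u g = u g * r b) (hrℓ : ∀ b c, r b * ℓ c = ℓ c * r b)
    (b b' c c' : B) (h g : H) :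
    ℓ b * (toConv u * toConv v) h * r b' * (ℓ c * (toConv u * toConv v) g * r c') =
      sw k h fun y h4 => sw k y fun x h3 => sw k x fun h1 h2 =>
      sw k g fun y' g4 => sw k y' fun x' g3 => sw k x' fun g1 g2 =>
        ℓ (b * act h1 c * σ h2 g1) * (toConv u * toConv v) (h3 * g2) *
          r (c' * act (𝑺 g4) b' * σ (𝑺 g3) (𝑺 h4)) := by
  set N := toConv u * toConv v with hN
  let T₁ : 𝑾 := toConv (ℓ ∘ₗ TensorProduct.lift σ)
  let T₂ : 𝑾 := toConv (r ∘ₗ TensorProduct.lift (σ.compl₁₂ 𝑺 𝑺).flip)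
  let A : H →ₗ[k] R := ℓ ∘ₗ act.flip c
  let D : H →ₗ[k] R := r ∘ₗ act.flip b' ∘ₗ 𝑺
  have e1 : fst v * (cst (ℓ c) : 𝑾) = cst (ℓ c) * fst v :=
    conv_ext₂ fun h g => by simp [-LinearMap.convMul_apply, hvℓ]
  have e1' : (cst (r b') : 𝑾) * cst (ℓ c) = cst (ℓ c) * cst (r b') :=
    conv_ext₂ fun h g => by
      rw [cst_mul_apply, cst_mul_apply]
      simp [cst, hrℓ]
  have e2 : fst v * snd u = snd u * fst v :=
    conv_ext₂ fun h g => by rw [fst_mul_snd_apply, snd_mul_fst_apply, hvu]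
  have e2' : (cst (r b') : 𝑾) * snd u = snd u * cst (r b') :=
    conv_ext₂ fun h g => by simp [-LinearMap.convMul_apply, hru]
  have e3 : fst u * (cst (ℓ c) : 𝑾) = fst A * fst u :=
    conv_ext₂ fun h g => by
      rw [fst_mul_fst, mul_cst_apply, fst_apply, fst_apply, conv_apply, smul_mul_assoc, hu]
      rfl
  have e4 : fst u * snd u = T₁ * viaMul u :=
    conv_ext₂ fun h g => by
      rw [fst_mul_snd_apply, huu, conv_apply₂]
      simp [T₁]
  have e5 : (cst (r b') : 𝑾) * snd v = snd v * snd D :=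
    conv_ext₂ fun h g => by
      rw [snd_mul_snd, cst_mul_apply, snd_apply, snd_apply, conv_apply, mul_smul_comm, hv]
      rfl
  have e6 : fst v * snd v = viaMul v * T₂ :=
    conv_ext₂ fun h g => by
      rw [fst_mul_snd_apply, hvv, conv_apply₂]
      simp [T₂]
  have eN : fst N.ofConv = fst u * fst v := (fst_mul_fst u v).symm
  have eN' : snd N.ofConv = snd u * snd v := (snd_mul_snd u v).symm
  have eNm : viaMul N.ofConv = viaMul u * viaMul v := (viaMul_mul_viaMul u v).symm
  have main : (cst (ℓ b) : 𝑾) * (fst N.ofConv * cst (r b') * cst (ℓ c) * snd N.ofConv) *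
      cst (r c') =
      cst (ℓ b) * (fst A * T₁ * viaMul N.ofConv * T₂ * snd D) * cst (r c') := by
    congr 2
    calc fst N.ofConv * cst (r b') * cst (ℓ c) * snd N.ofConv
        = fst u * (fst v * (cst (r b') * cst (ℓ c)) * snd u) * snd v := by
          rw [eN, eN']; simp only [mul_assoc]
      _ = fst u * ((fst v * cst (ℓ c)) * (cst (r b') * snd u)) * snd v := by
          rw [e1']; simp only [mul_assoc]
      _ = (fst u * cst (ℓ c)) * (fst v * snd u) * (cst (r b') * snd v) := by
          rw [e1, e2']; simp only [mul_assoc]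
      _ = fst A * (fst u * snd u) * (fst v * snd v) * snd D := by
          rw [e2, e3, e5]; simp only [mul_assoc]
      _ = _ := by
          rw [e4, e6, eNm]; simp only [mul_assoc]
  have hL : ℓ b * N h * r b' * (ℓ c * N g * r c') =
      ((cst (ℓ b) : 𝑾) * (fst N.ofConv * cst (r b') * cst (ℓ c) * snd N.ofConv) *
        cst (r c') : 𝑾) (h ⊗ₜ[k] g) := by
    have : fst N.ofConv * (cst (r b') : 𝑾) * cst (ℓ c) =
        fst (LinearMap.mulRight k (r b' * ℓ c) ∘ₗ N.ofConv) :=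
      conv_ext₂ fun h g => by
        rw [mul_cst_apply, mul_cst_apply, fst_apply, fst_apply]
        simp [-LinearMap.convMul_apply, mul_assoc]
    rw [this, mul_cst_apply, cst_mul_apply, fst_mul_snd_apply]
    simp [-LinearMap.convMul_apply, mul_assoc]
  rw [hL, main, mul_cst_apply, cst_mul_apply, mul_snd_apply, mul_sw, sw_mul]
  have step : ∀ y' g4 : H,
      ℓ b * ((fst A * T₁ * viaMul N.ofConv * T₂) (h ⊗ₜ[k] y') * D g4) * r c' =
      sw k h fun y h4 => sw k y' fun x' g3 => sw k y fun x h3 => sw k x' fun g1 g2 =>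
        sw k x fun h1 h2 =>
        ℓ (b * act h1 c * σ h2 g1) * N (h3 * g2) *
          r (c' * act (𝑺 g4) b' * σ (𝑺 g3) (𝑺 h4)) := by
    intro y' g4
    simp only [conv_apply₂ (fst A * T₁ * viaMul N.ofConv) T₂, conv_apply₂ (fst A * T₁),
      fst_mul_apply, mul_sw, sw_mul]
    refine sw_congr fun y h4 => sw_congr fun x' g3 => sw_congr fun x h3 => sw_congr fun g1 g2 =>
      sw_congr fun h1 h2 => ?_
    simp [-LinearMap.convMul_apply, A, D, T₁, T₂, hℓ, hr, mul_assoc]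
  rw [sw_congr step, sw_comm]
  refine sw_congr fun y h4 => ?_
  rw [sw_congr fun y' g4 => sw_comm y' y _, sw_comm]
  refine sw_congr fun x h3 => ?_
  rw [sw_congr fun y' g4 => sw_congr fun x' g3 => sw_comm x' x _,
    sw_congr fun y' g4 => sw_comm y' x _, sw_comm]

end Core

/-! ### The crossed product relations in `End (B ⊗ H)` -/

section CrossedProduct

variable {k : Type*} [Field k] {H : Type*} [Ring H] [Bialgebra k H]
variable {B : Type*} [Ring B] [Algebra k B]

variable (k H) in
/-- The embedding `b ↦ b ⊗ 1` of `B` into the tensor product algebra `B ⊗ H`. -/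
def inc : B →ₐ[k] B ⊗[k] H := Algebra.TensorProduct.includeLeft

variable (k H) in
/-- Left multiplication by `b ⊗ 1` in the tensor product algebra `B ⊗ H`. -/
def lm : B →ₐ[k] Module.End k (B ⊗[k] H) := (Algebra.lmul k (B ⊗[k] H)).comp (inc k H)

theorem lm_apply (b : B) (y : B ⊗[k] H) : lm k H b y = inc k H b * y := rfl

/-- The convolution product `h ⊗ g ↦ σ(h₁, g₁) ⊗ h₂ g₂`, with values in `B ⊗ H`. -/
def crossV (σ : H →ₗ[k] H →ₗ[k] B) : WithConv (H ⊗[k] H →ₗ[k] B ⊗[k] H) :=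
  toConv ((inc k H).toLinearMap ∘ₗ TensorProduct.lift σ) *
    viaMul (Algebra.TensorProduct.includeRight (R := k) (A := B) (B := H)).toLinearMap

/-- The map `h ⊗ g ↦ (h₁ ▷ c) σ(h₂, g₁) ⊗ h₃ g₂`, depending linearly on `c`. -/
def crossW (act : H →ₗ[k] B →ₗ[k] B) (σ : H →ₗ[k] H →ₗ[k] B) :
    B →ₗ[k] H ⊗[k] H →ₗ[k] B ⊗[k] H where
  toFun c := (fst ((inc k H).toLinearMap ∘ₗ act.flip c) * crossV σ).ofConv
  map_add' c d := TensorProduct.ext' fun h g => by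
    simp only [LinearMap.add_apply, fst_mul_apply]
    simp [sw, add_mul, Finset.sum_add_distrib]
  map_smul' t c := TensorProduct.ext' fun h g => by
    simp only [LinearMap.smul_apply, fst_mul_apply]
    simp [sw, Finset.smul_sum]

/-- The left action of `h` on the crossed product `B ⊗ H`, i.e. left multiplication by `1 # h`:
`c ⊗ g ↦ (h₁ ▷ c) σ(h₂, g₁) ⊗ h₃ g₂`. -/
def crossU (act : H →ₗ[k] B →ₗ[k] B) (σ : H →ₗ[k] H →ₗ[k] B) :
    H →ₗ[k] Module.End k (B ⊗[k] H) :=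
  (TensorProduct.uncurry (.id k) B H (B ⊗[k] H)) ∘ₗ
    ((TensorProduct.lcurry (.id k) H H (B ⊗[k] H)) ∘ₗ crossW act σ).flip

variable {act : H →ₗ[k] B →ₗ[k] B} {σ σi : H →ₗ[k] H →ₗ[k] B}

theorem crossU_tmul (c : B) (h g : H) :
    crossU act σ h (c ⊗ₜ[k] g) =
      (fst ((inc k H).toLinearMap ∘ₗ act.flip c) * crossV σ) (h ⊗ₜ[k] g) := by
  simp [crossU, crossW, -LinearMap.convMul_apply]

theorem act_mul_sw (hm : Measuring k H B act) (h : H) (a b : B) :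
    act h (a * b) = sw k h fun x y => act x a * act y b :=
  hm.act_mul h a b _ _ (sw_isRep2 h)

/-- `U h ∘ L c = L (h₁ ▷ c) ∘ U h₂`. -/
theorem crossU_mul_lm (hm : Measuring k H B act) (h : H) (c : B) :
    crossU act σ h * lm k H c = sw k h fun a b => lm k H (act a c) * crossU act σ b := by
  refine TensorProduct.ext' fun d g => ?_
  have e : fst ((inc k H).toLinearMap ∘ₗ act.flip (c * d)) =
      fst ((inc k H).toLinearMap ∘ₗ act.flip c) * fst ((inc k H).toLinearMap ∘ₗ act.flip d) := by
    rw [fst_mul_fst]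
    congr 1
    ext x
    simp [conv_apply, act_mul_sw hm, map_sw, -LinearMap.convMul_apply]
  have : lm k H c (d ⊗ₜ[k] g) = (c * d) ⊗ₜ[k] g := by simp [lm_apply, inc]
  rw [Module.End.mul_apply, this, crossU_tmul, e, mul_assoc, fst_mul_apply]
  simp [sw, lm_apply, crossU_tmul, -LinearMap.convMul_apply]

theorem crossU_one_tmul (hm : Measuring k H B act) (h g : H) :
    crossU act σ h (1 ⊗ₜ[k] g) = crossV σ (h ⊗ₜ[k] g) := by
  rw [crossU_tmul, fst_mul_apply]
  simpa [hm.act_one] using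
    sw_counit_left ((crossV σ).ofConv ∘ₗ (TensorProduct.mk k H H).flip g) h

theorem crossU_one (hcd : CocycleDatum k H B act σ σi) : crossU act σ 1 = 1 := by
  refine TensorProduct.ext' fun c g => ?_
  have h1 : crossV σ ((1 : H) ⊗ₜ[k] g) = 1 ⊗ₜ[k] g := by
    rw [crossV, LinearMap.convMul_apply, TensorProduct.comul_tmul, Bialgebra.comul_one,
      comul_eq_sw, Algebra.TensorProduct.one_def]
    have := sw_counit_left (TensorProduct.mk k B H 1) g
    simpa [sw, TensorProduct.tmul_sum, hcd.one_sigma] using this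
  have h2 : crossU act σ 1 (c ⊗ₜ[k] g) = lm k H c (crossU act σ 1 (1 ⊗ₜ[k] g)) := by
    rw [crossU_one_tmul hcd.toMeasuring, crossU_tmul, fst, LinearMap.convMul_apply,
      TensorProduct.comul_tmul, Bialgebra.comul_one,
      comul_eq_sw, Algebra.TensorProduct.one_def]
    have := sw_counit_left (LinearMap.mulLeft k (inc k H c) ∘ₗ (crossV σ).ofConv ∘ₗ
      TensorProduct.mk k H H 1) g
    simpa [sw, TensorProduct.tmul_sum, hcd.one_act, lm_apply] using this
  rw [h2, crossU_one_tmul hcd.toMeasuring, h1, lm_apply]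
  simp [inc]

/-- Twisted associativity of the action as an identity of convolution products on `H ⊗ H`. -/
theorem act_act_conv (hcd : CocycleDatum k H B act σ σi) (d : B) :
    (toConv ((lm k H).toLinearMap ∘ₗ TensorProduct.lift (act.compl₂ (act.flip d))) :
        WithConv (H ⊗[k] H →ₗ[k] Module.End k (B ⊗[k] H))) =
      toConv ((lm k H).toLinearMap ∘ₗ TensorProduct.lift σ) *
        viaMul ((lm k H).toLinearMap ∘ₗ act.flip d) *
        toConv ((lm k H).toLinearMap ∘ₗ TensorProduct.lift σi) := by
  refine conv_ext₂ fun h g => ?_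
  obtain ⟨n, h1, h2, h3, hh, eh⟩ := exists_rep3 (k := k) (M := B) h
  obtain ⟨m, g1, g2, g3, hg, eg⟩ := exists_rep3 (k := k) (M := B) g
  have := hcd.act_act h g d h1 h2 h3 g1 g2 g3 hh hg
  rw [eh fun a b c => ∑ j, σ a (g1 j) * act (b * g2 j) d * σi c (g3 j)] at this
  have eg' (x y z : H) := eg fun a b c => σ x a * act (y * b) d * σi z c
  simp only [eg'] at this
  simp only [conv_apply₂, sw_mul]
  simp only [LinearMap.comp_apply, TensorProduct.lift.tmul, viaMul_apply,
    LinearMap.compl₂_apply, LinearMap.flip_apply, AlgHom.toLinearMap_apply, this, map_sw, map_mul]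
  refine Finset.sum_congr rfl fun i _ => ?_
  exact sw_comm _ _ _

theorem lm_sigmai_mul_sigma (hcd : CocycleDatum k H B act σ σi) :
    (toConv ((lm k H).toLinearMap ∘ₗ TensorProduct.lift σi) :
        WithConv (H ⊗[k] H →ₗ[k] Module.End k (B ⊗[k] H))) *
      toConv ((lm k H).toLinearMap ∘ₗ TensorProduct.lift σ) = 1 := by
  refine conv_ext₂ fun h g => ?_
  have := congrArg (lm k H) (hcd.conv_right h g _ _ _ _ (sw_isRep2 h) (sw_isRep2 g))
  rw [conv_apply₂]
  simpa [sw, LinearMap.convOne_apply, Algebra.algebraMap_eq_smul_one, mul_comm] using this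

/-- The cocycle identity, tested against the vectors `1 ⊗ f`. -/
theorem crossU_crossU_one_tmul (hcd : CocycleDatum k H B act σ σi) (h g f : H) :
    crossU act σ h (crossU act σ g (1 ⊗ₜ[k] f)) =
      sw k h fun a b => sw k g fun c d =>
        lm k H (σ a c) (crossU act σ (b * d) (1 ⊗ₜ[k] f)) := by
  let j : H →ₗ[k] B ⊗[k] H :=
    (Algebra.TensorProduct.includeRight (R := k) (A := B) (B := H)).toLinearMap
  let i : B →ₗ[k] B ⊗[k] H := (inc k H).toLinearMap
  let Z₁ : WithConv (H ⊗[k] (H ⊗[k] H) →ₗ[k] B ⊗[k] H) :=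
    toConv (i ∘ₗ TensorProduct.lift (act.compl₂ (TensorProduct.lift σ)))
  let Z₂ : WithConv (H ⊗[k] (H ⊗[k] H) →ₗ[k] B ⊗[k] H) :=
    toConv (i ∘ₗ TensorProduct.lift (σ.compl₂ (LinearMap.mul' k H)))
  let Z₃ : WithConv (H ⊗[k] (H ⊗[k] H) →ₗ[k] B ⊗[k] H) :=
    toConv (j ∘ₗ LinearMap.mul' k H ∘ₗ (LinearMap.mul' k H).lTensor H)
  let Z₄ : WithConv (H ⊗[k] (H ⊗[k] H) →ₗ[k] B ⊗[k] H) :=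
    toConv (i ∘ₗ TensorProduct.lift (σ.compl₂ ((TensorProduct.rid k H).toLinearMap ∘ₗ
      (Coalgebra.counit (R := k)).lTensor H)))
  let Z₅ : WithConv (H ⊗[k] (H ⊗[k] H) →ₗ[k] B ⊗[k] H) :=
    toConv (i ∘ₗ TensorProduct.lift σ ∘ₗ (LinearMap.mul' k H).rTensor H ∘ₗ
      (TensorProduct.assoc k H H H).symm.toLinearMap)
  -- `Z₁, Z₂, Z₃, Z₄, Z₅` send `h ⊗ g ⊗ f` to `h ▷ σ(g, f)`, `σ(h, g f)`, `h g f`, `ε(f) σ(h, g)`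
  -- and `σ(h g, f)` respectively.
  have hZ : Z₁ * Z₂ = Z₄ * Z₅ := by
    refine WithConv.ext (TensorProduct.ext_threefold' fun h g f => ?_)
    have := congrArg i (hcd.cocycle h g f _ _ _ _ _ _ (sw_isRep2 h) (sw_isRep2 g) (sw_isRep2 f))
    change (Z₁ * Z₂) _ = (Z₄ * Z₅) _
    rw [conv_apply₃, conv_apply₃]
    have hf (a b c d : H) : (sw k f fun p q =>
        Z₄ (a ⊗ₜ[k] (c ⊗ₜ[k] p)) * Z₅ (b ⊗ₜ[k] (d ⊗ₜ[k] q))) = i (σ a c * σ (b * d) f) := by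
      simpa [Z₄, Z₅, i] using
        sw_counit_left (LinearMap.mulLeft k (i (σ a c)) ∘ₗ i ∘ₗ σ (b * d)) f
    simp only [hf]
    refine Eq.trans ?_ (this.trans ?_)
    · simp [sw, Z₁, Z₂, i]
    · simp only [sw, map_sum]
  have hV₁ (h g f : H) : crossV σ (h ⊗ₜ[k] (g * f)) = (Z₂ * Z₃) (h ⊗ₜ[k] (g ⊗ₜ[k] f)) := by
    rw [crossV, conv_apply_tmul_mul, conv_apply₃]
    simp [Z₂, Z₃, i, j]
  have hV₂ (h g f : H) : crossV σ ((h * g) ⊗ₜ[k] f) = (Z₅ * Z₃) (h ⊗ₜ[k] (g ⊗ₜ[k] f)) := by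
    rw [crossV, conv_apply_mul_tmul, conv_apply₃]
    simp [Z₅, Z₃, i, j, mul_assoc]
  have hl : crossU act σ h (crossU act σ g (1 ⊗ₜ[k] f)) =
      (Z₁ * (Z₂ * Z₃)) (h ⊗ₜ[k] (g ⊗ₜ[k] f)) := by
    rw [crossU_one_tmul hcd.toMeasuring, conv_apply₃]
    have hV : crossV σ (g ⊗ₜ[k] f) = sw k g fun c d => sw k f fun p q =>
        lm k H (σ c p) (1 ⊗ₜ[k] (d * q)) := by
      rw [crossV, conv_apply₂]
      simp [lm_apply]
    have ht (c d p q : H) : crossU act σ h (lm k H (σ c p) (1 ⊗ₜ[k] (d * q))) =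
        sw k h fun a b =>
          Z₁ (a ⊗ₜ[k] (c ⊗ₜ[k] p)) * (Z₂ * Z₃) (b ⊗ₜ[k] (d ⊗ₜ[k] q)) := by
      rw [← Module.End.mul_apply, crossU_mul_lm hcd.toMeasuring]
      simp only [← hV₁, ← crossU_one_tmul hcd.toMeasuring, sw, LinearMap.sum_apply,
        Module.End.mul_apply, lm_apply]
      simp [Z₁, i]
    rw [hV, map_sw]
    simp only [map_sw, ht]
    simp only [sw_comm _ h]
  have hr : (sw k h fun a b => sw k g fun c d =>
        lm k H (σ a c) (crossU act σ (b * d) (1 ⊗ₜ[k] f))) =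
      (Z₄ * (Z₅ * Z₃)) (h ⊗ₜ[k] (g ⊗ₜ[k] f)) := by
    rw [conv_apply₃]
    refine sw_congr fun a b => sw_congr fun c d => ?_
    simp only [← hV₂]
    rw [crossU_one_tmul hcd.toMeasuring, lm_apply]
    simpa [Z₄, i] using (sw_counit_left (LinearMap.mulLeft k (i (σ a c)) ∘ₗ (crossV σ).ofConv ∘ₗ
      TensorProduct.mk k H H (b * d)) f).symm
  rw [hl, hr, ← mul_assoc, ← mul_assoc, hZ]

theorem conj_mul_of_inv {Q : Type*} [Monoid Q] {a a' : Q} (ha : a' * a = 1) (b u : Q) :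
    a * (b * u) = a * b * a' * (a * u) := by
  rw [mul_assoc (a * b), ← mul_assoc a', ha, one_mul, mul_assoc]

/-- `U h ∘ U g = L (σ(h₁, g₁)) ∘ U (h₂ g₂)`. Both sides `Z` satisfy
`Z(h, g) ∘ L d = L (h₁ ▷ (g₁ ▷ d)) ∘ Z(h₂, g₂)`, which reduces the claim to the vectors `1 ⊗ f`. -/
theorem crossU_mul_crossU (hcd : CocycleDatum k H B act σ σi) (h g : H) :
    crossU act σ h * crossU act σ g = sw k h fun a b => sw k g fun c d =>
      lm k H (σ a c) * crossU act σ (b * d) := by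
  let U := crossU act σ
  let X : WithConv (H ⊗[k] H →ₗ[k] Module.End k (B ⊗[k] H)) := fst U * snd U
  let Y : WithConv (H ⊗[k] H →ₗ[k] Module.End k (B ⊗[k] H)) :=
    toConv ((lm k H).toLinearMap ∘ₗ TensorProduct.lift σ) * viaMul U
  let A (d : B) : WithConv (H ⊗[k] H →ₗ[k] Module.End k (B ⊗[k] H)) :=
    toConv ((lm k H).toLinearMap ∘ₗ TensorProduct.lift (act.compl₂ (act.flip d)))
  have hXA (d : B) : X * cst (lm k H d) = A d * X := conv_ext₂ fun h g => by
    rw [mul_cst_apply, fst_mul_snd_apply, conv_apply₂, mul_assoc,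
      crossU_mul_lm hcd.toMeasuring, mul_sw, sw_comm]
    refine sw_congr fun c d' => ?_
    rw [← mul_assoc, crossU_mul_lm hcd.toMeasuring, sw_mul]
    refine sw_congr fun a b => ?_
    rw [fst_mul_snd_apply]
    simp [A, U, mul_assoc]
  have hYA (d : B) : Y * cst (lm k H d) = A d * Y := by
    have e : viaMul U * cst (lm k H d) =
        viaMul ((lm k H).toLinearMap ∘ₗ act.flip d) * viaMul U := conv_ext₂ fun h g => by
      rw [mul_cst_apply, viaMul_mul_viaMul, viaMul_apply, viaMul_apply, conv_apply,
        crossU_mul_lm hcd.toMeasuring]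
      rfl
    change _ = A d * (_ * viaMul U)
    rw [mul_assoc, e, show A d = _ from act_act_conv hcd d]
    exact conj_mul_of_inv (lm_sigmai_mul_sigma hcd) _ _
  have hXY (h g f : H) : X (h ⊗ₜ[k] g) (1 ⊗ₜ[k] f) = Y (h ⊗ₜ[k] g) (1 ⊗ₜ[k] f) := by
    rw [fst_mul_snd_apply, conv_apply₂, Module.End.mul_apply, crossU_crossU_one_tmul hcd]
    simp [sw, U]
  have hX : X (h ⊗ₜ[k] g) = Y (h ⊗ₜ[k] g) := by
    refine TensorProduct.ext' fun d f => ?_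
    have hd : d ⊗ₜ[k] f = lm k H d (1 ⊗ₜ[k] f) := by simp [lm_apply, inc]
    rw [hd, ← Module.End.mul_apply, ← Module.End.mul_apply, ← mul_cst_apply, ← mul_cst_apply,
      hXA, hYA, conv_apply₂, conv_apply₂]
    simp only [sw, LinearMap.sum_apply, Module.End.mul_apply, hXY]
  rw [fst_mul_snd_apply, conv_apply₂] at hX
  simp only [viaMul_apply, LinearMap.comp_apply, TensorProduct.lift.tmul,
    AlgHom.toLinearMap_apply] at hX
  exact hX

end CrossedProduct

/-! ### The embedding into `End (B ⊗ H) ⊗ End (B ⊗ H)ᵒᵖ` -/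

section Embedding

variable {k : Type*} [Field k] {H : Type*} [Ring H] [HopfAlgebra k H]
variable {B : Type*} [Ring B] [Algebra k B]
variable {act : H →ₗ[k] B →ₗ[k] B} {σ σi : H →ₗ[k] H →ₗ[k] B}

local notation "𝑺" => HopfAlgebra.antipode k (A := H)

variable (k H B) in
/-- The algebra `End(B ⊗ H) ⊗ End(B ⊗ H)ᵒᵖ`. -/
abbrev Env : Type _ := Module.End k (B ⊗[k] H) ⊗[k] (Module.End k (B ⊗[k] H))ᵐᵒᵖ

/-- The embedding of `End(B ⊗ H)` as the left tensor factor. -/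
def envL : Module.End k (B ⊗[k] H) →ₗ[k] Env k H B :=
  (Algebra.TensorProduct.includeLeft (R := k) (S := k)
    (A := Module.End k (B ⊗[k] H)) (B := (Module.End k (B ⊗[k] H))ᵐᵒᵖ)).toLinearMap

/-- The order-reversing embedding of `End(B ⊗ H)` as the right tensor factor. -/
def envR : Module.End k (B ⊗[k] H) →ₗ[k] Env k H B :=
  (Algebra.TensorProduct.includeRight (R := k)
    (A := Module.End k (B ⊗[k] H)) (B := (Module.End k (B ⊗[k] H))ᵐᵒᵖ)).toLinearMap ∘ₗ
    (MulOpposite.opLinearEquiv k).toLinearMap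

theorem envL_apply (x : Module.End k (B ⊗[k] H)) : envL x = x ⊗ₜ[k] 1 := rfl

theorem envR_apply (x : Module.End k (B ⊗[k] H)) : envR x = 1 ⊗ₜ[k] MulOpposite.op x := rfl

theorem envL_mul (x y : Module.End k (B ⊗[k] H)) : envL (x * y) = envL x * envL y := by
  simp [envL_apply]

theorem envR_mul (x y : Module.End k (B ⊗[k] H)) : envR (x * y) = envR y * envR x := by
  simp [envR_apply]

theorem envR_mul_envL (x y : Module.End k (B ⊗[k] H)) : envR x * envL y = envL y * envR x := by
  simp [envL_apply, envR_apply]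

variable (k H B) in
/-- `ℓ b = L b ⊗ 1`. -/
def lB : B →ₗ[k] Env k H B := envL ∘ₗ (lm k H).toLinearMap

variable (k H B) in
/-- `r b = 1 ⊗ (L b)ᵒᵖ`. -/
def rB : B →ₗ[k] Env k H B := envR ∘ₗ (lm k H).toLinearMap

/-- `u h = U h ⊗ 1`. -/
def uH (act : H →ₗ[k] B →ₗ[k] B) (σ : H →ₗ[k] H →ₗ[k] B) : H →ₗ[k] Env k H B :=
  envL ∘ₗ crossU act σ

/-- `v h = 1 ⊗ (U (S h))ᵒᵖ`. -/
def vH (act : H →ₗ[k] B →ₗ[k] B) (σ : H →ₗ[k] H →ₗ[k] B) : H →ₗ[k] Env k H B :=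
  envR ∘ₗ crossU act σ ∘ₗ 𝑺

theorem rB_mul_vH (hm : Measuring k H B act) (g : H) (b : B) :
    rB k H B b * vH act σ g = sw k g fun c d => vH act σ c * rB k H B (act (𝑺 d) b) := by
  have e : crossU act σ (𝑺 g) * lm k H b = sw k g fun c d =>
      lm k H (act (𝑺 d) b) * crossU act σ (𝑺 c) := by
    rw [crossU_mul_lm hm]
    exact (conv_apply (toConv ((lm k H).toLinearMap ∘ₗ act.flip b)) (toConv (crossU act σ))
      (𝑺 g)).symm.trans (conv_apply_antipode _ _ g)
  have := congrArg envR e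
  rw [envR_mul, map_sw] at this
  simp only [envR_mul] at this
  exact this

theorem vH_mul_vH (hcd : CocycleDatum k H B act σ σi) (h g : H) :
    vH act σ h * vH act σ g = sw k h fun a b => sw k g fun c d =>
      vH act σ (a * c) * rB k H B (σ (𝑺 d) (𝑺 b)) := by
  have e : crossU act σ (𝑺 g) * crossU act σ (𝑺 h) = sw k g fun c d => sw k h fun a b =>
      lm k H (σ (𝑺 d) (𝑺 b)) * crossU act σ (𝑺 (a * c)) := by
    rw [crossU_mul_crossU hcd]
    refine Eq.trans ?_ ((conv_apply_antipode₂ (toConv ((lm k H).toLinearMap ∘ₗ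
      TensorProduct.lift σ)) (viaMul (crossU act σ)) g h).trans ?_)
    · rw [conv_apply₂]
      simp only [viaMul_apply, LinearMap.comp_apply, TensorProduct.lift.tmul,
        AlgHom.toLinearMap_apply]
    · simp only [viaMul_apply, LinearMap.comp_apply, TensorProduct.lift.tmul,
        AlgHom.toLinearMap_apply, HopfAlgebra.antipode_mul_antidistrib]
  have := congrArg envR e
  rw [envR_mul, map_sw] at this
  simp only [envR_mul, map_sw] at this
  rw [sw_comm]
  exact this

/-- The linear map `b ⊗ b' ⊗ h ↦ ℓ(b) u(h₁) v(h₂) r(b')`. -/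
def emb (act : H →ₗ[k] B →ₗ[k] B) (σ : H →ₗ[k] H →ₗ[k] B) :
    B ⊗[k] (B ⊗[k] H) →ₗ[k] Env k H B :=
  TensorProduct.lift ((LinearMap.mul k (Env k H B)).compl₁₂ (lB k H B)
    (TensorProduct.lift ((LinearMap.mul k (Env k H B)).flip.compl₁₂ (rB k H B)
      (toConv (uH act σ) * toConv (vH act σ)).ofConv)))

theorem emb_tmul (b b' : B) (h : H) : emb act σ (b ⊗ₜ[k] (b' ⊗ₜ[k] h)) =
    lB k H B b * (toConv (uH act σ) * toConv (vH act σ)) h * rB k H B b' := by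
  simp [emb, mul_assoc, -LinearMap.convMul_apply]

set_option maxHeartbeats 1000000 in
theorem emb_mult (hcd : CocycleDatum k H B act σ σi)
    {mult : B ⊗[k] (B ⊗[k] H) →ₗ[k] B ⊗[k] (B ⊗[k] H) →ₗ[k] B ⊗[k] (B ⊗[k] H)}
    (hmult : IsAlgebroidMul k H B act σ mult) (x y : B ⊗[k] (B ⊗[k] H)) :
    emb act σ (mult x y) = emb act σ x * emb act σ y := by
  suffices mult.compr₂ (emb act σ) =
      (LinearMap.mul k (Env k H B)).compl₁₂ (emb act σ) (emb act σ) from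
    LinearMap.congr_fun (LinearMap.congr_fun this x) y
  refine TensorProduct.ext_threefold' fun b b' h => TensorProduct.ext_threefold' fun c c' g => ?_
  obtain ⟨n, h1, h2, h3, h4, hh, eh⟩ := exists_rep4 (k := k) (M := B ⊗[k] (B ⊗[k] H)) h
  obtain ⟨m, g1, g2, g3, g4, hg, eg⟩ := exists_rep4 (k := k) (M := B ⊗[k] (B ⊗[k] H)) g
  have := hmult b b' c c' h g _ _ _ _ _ _ _ _ hh hg
  rw [eh fun x y z w => ∑ j, (b * act x c * σ y (g1 j)) ⊗ₜ[k]
    ((c' * act (𝑺 (g4 j)) b' * σ (𝑺 (g3 j)) (𝑺 w)) ⊗ₜ[k] (z * g2 j))] at this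
  have eg' (x y z w : H) := eg fun p q s t => (b * act x c * σ y p) ⊗ₜ[k]
    ((c' * act (𝑺 t) b' * σ (𝑺 s) (𝑺 w)) ⊗ₜ[k] (z * q))
  simp only [eg'] at this
  simp only [LinearMap.compr₂_apply, LinearMap.compl₁₂_apply, LinearMap.mul_apply', this, map_sw,
    emb_tmul]
  symm
  refine core_mul (R := Env k H B) act σ (lB k H B) (rB k H B) (uH act σ) (vH act σ)
    (fun a b => ?_) (fun a b => ?_)
    (fun h c => ?_) (fun h g => ?_) (fun h c => rB_mul_vH hcd.toMeasuring h c)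
    (vH_mul_vH hcd) (fun h g => ?_) (fun h c => ?_) (fun b g => ?_) (fun b c => ?_) b b' c c' h g
  · simp [lB, envL_mul]
  · simp [rB, envR_mul]
  · simp [lB, uH, ← envL_mul, crossU_mul_lm hcd.toMeasuring, map_sw]
  · simp [lB, uH, ← envL_mul, crossU_mul_crossU hcd, map_sw]
  all_goals exact envR_mul_envL _ _

/-- A left inverse of `emb`: evaluate both tensor factors at `1 ⊗ 1` and apply the counit to the
`H`-leg of the second. -/
def embInv : Env k H B →ₗ[k] B ⊗[k] (B ⊗[k] H) :=
  (TensorProduct.comm k H B).toLinearMap.lTensor B ∘ₗ (TensorProduct.assoc k B H B).toLinearMap ∘ₗ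
    TensorProduct.map (LinearMap.applyₗ (1 ⊗ₜ[k] 1))
      ((TensorProduct.rid k B).toLinearMap ∘ₗ (Coalgebra.counit (R := k)).lTensor B ∘ₗ
        LinearMap.applyₗ (1 ⊗ₜ[k] 1) ∘ₗ (MulOpposite.opLinearEquiv k).symm.toLinearMap)

theorem crossU_one_tmul_one (hcd : CocycleDatum k H B act σ σi) (h : H) :
    crossU act σ h ((1 : B) ⊗ₜ[k] (1 : H)) = 1 ⊗ₜ[k] h := by
  rw [crossU_one_tmul hcd.toMeasuring, crossV, LinearMap.convMul_apply, TensorProduct.comul_tmul,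
    Bialgebra.comul_one, comul_eq_sw, Algebra.TensorProduct.one_def]
  have := sw_counit_left (TensorProduct.mk k B H 1) h
  simpa [sw, TensorProduct.sum_tmul, hcd.sigma_one] using this

theorem embInv_emb (hcd : CocycleDatum k H B act σ σi) (x : B ⊗[k] (B ⊗[k] H)) :
    embInv (emb act σ x) = x := by
  suffices embInv ∘ₗ emb act σ = LinearMap.id from LinearMap.congr_fun this x
  refine TensorProduct.ext_threefold' fun b b' h => ?_
  have e (a c : H) : embInv (lB k H B b * (uH act σ a * vH act σ c) * rB k H B b') =
      Coalgebra.counit (R := k) c • (b ⊗ₜ[k] (b' ⊗ₜ[k] a)) := by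
    simp only [lB, rB, uH, vH, LinearMap.comp_apply, envL_apply, envR_apply,
      Algebra.TensorProduct.tmul_mul_tmul, one_mul, mul_one, embInv, AlgHom.toLinearMap_apply,
      TensorProduct.map_tmul, LinearEquiv.coe_coe, ← MulOpposite.op_mul,
      LinearMap.applyₗ_apply_apply,
      MulOpposite.coe_opLinearEquiv_symm, MulOpposite.unop_op, Module.End.mul_apply,
      crossU_one_tmul_one hcd, lm_apply, inc]
    simp [TensorProduct.smul_tmul', TensorProduct.tmul_smul]
  rw [LinearMap.comp_apply, emb_tmul,
    conv_apply (R := Env k H B) (toConv (uH act σ)) (toConv (vH act σ)) h, mul_sw, sw_mul, map_sw]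
  simp only [e]
  exact sw_counit_right (TensorProduct.mk k B _ b ∘ₗ TensorProduct.mk k B H b') h

theorem emb_tmul_one (hcd : CocycleDatum k H B act σ σi) (b b' : B) :
    emb act σ (b ⊗ₜ[k] (b' ⊗ₜ[k] (1 : H))) = lB k H B b * rB k H B b' := by
  have : (toConv (uH act σ) * toConv (vH act σ)) (1 : H) = 1 := by
    rw [LinearMap.convMul_apply, Bialgebra.comul_one, Algebra.TensorProduct.one_def]
    simp [uH, vH, crossU_one hcd, envL_apply, envR_apply, Algebra.TensorProduct.one_def]
  rw [emb_tmul, this, mul_one]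

end Embedding

section Statements

variable {k : Type*} [Field k]
variable {H : Type*} [Ring H] [HopfAlgebra k H]
variable {B : Type*} [Ring B] [Algebra k B]

/-- Proposition 3.5 (algebra part): the cocycle Hopf algebroid product on `B ⊗ B ⊗ H` is
associative and unital, the source and target maps are (anti)algebra maps with commuting
images, and `η : B ⊗ B^{op} → B ⊗ B ⊗ H` is an algebra map. -/
theorem statement11 (act : H →ₗ[k] B →ₗ[k] B) (σ σi : H →ₗ[k] H →ₗ[k] B)
    (hcd : CocycleDatum k H B act σ σi)
    (mult : B ⊗[k] (B ⊗[k] H) →ₗ[k] B ⊗[k] (B ⊗[k] H) →ₗ[k] B ⊗[k] (B ⊗[k] H))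
    (hmult : IsAlgebroidMul k H B act σ mult) :
    -- associativity
    (∀ x y z : B ⊗[k] (B ⊗[k] H), mult (mult x y) z = mult x (mult y z))
    ∧
    -- unit 1⊗1⊗1
    (∀ x : B ⊗[k] (B ⊗[k] H),
      mult ((1 : B) ⊗ₜ[k] ((1 : B) ⊗ₜ[k] (1 : H))) x = x
      ∧ mult x ((1 : B) ⊗ₜ[k] ((1 : B) ⊗ₜ[k] (1 : H))) = x)
    ∧
    -- s is an algebra map
    (∀ b c : B,
      mult (b ⊗ₜ[k] ((1 : B) ⊗ₜ[k] (1 : H))) (c ⊗ₜ[k] ((1 : B) ⊗ₜ[k] (1 : H)))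
        = (b * c) ⊗ₜ[k] ((1 : B) ⊗ₜ[k] (1 : H)))
    ∧
    -- t is an algebra map from B^{op} : t(b)t(c) = t(cb)
    (∀ b c : B,
      mult ((1 : B) ⊗ₜ[k] (b ⊗ₜ[k] (1 : H))) ((1 : B) ⊗ₜ[k] (c ⊗ₜ[k] (1 : H)))
        = (1 : B) ⊗ₜ[k] ((c * b) ⊗ₜ[k] (1 : H)))
    ∧
    -- the images of s and t commute
    (∀ b c : B,
      mult (b ⊗ₜ[k] ((1 : B) ⊗ₜ[k] (1 : H))) ((1 : B) ⊗ₜ[k] (c ⊗ₜ[k] (1 : H)))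
        = mult ((1 : B) ⊗ₜ[k] (c ⊗ₜ[k] (1 : H))) (b ⊗ₜ[k] ((1 : B) ⊗ₜ[k] (1 : H))))
    ∧
    -- η(b⊗b') = b⊗b'⊗1 is an algebra map on B ⊗ B^{op}
    (∀ b b' c c' : B,
      mult (b ⊗ₜ[k] (b' ⊗ₜ[k] (1 : H))) (c ⊗ₜ[k] (c' ⊗ₜ[k] (1 : H)))
        = (b * c) ⊗ₜ[k] ((c' * b') ⊗ₜ[k] (1 : H))) := by
  have hm := emb_mult hcd hmult
  have inj : Function.Injective (emb act σ) := Function.LeftInverse.injective (embInv_emb hcd)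
  have h1 : emb act σ ((1 : B) ⊗ₜ[k] ((1 : B) ⊗ₜ[k] (1 : H))) = 1 := by
    rw [emb_tmul_one hcd]
    simp [lB, rB, envL_apply, envR_apply, Algebra.TensorProduct.one_def]
  have hη (b b' c c' : B) :
      mult (b ⊗ₜ[k] (b' ⊗ₜ[k] (1 : H))) (c ⊗ₜ[k] (c' ⊗ₜ[k] (1 : H))) =
        (b * c) ⊗ₜ[k] ((c' * b') ⊗ₜ[k] (1 : H)) := inj <| by
    rw [hm]
    simp only [emb_tmul_one hcd]
    simp [lB, rB, envL_apply, envR_apply]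
  refine ⟨fun x y z => inj ?_, fun x => ⟨inj ?_, inj ?_⟩, fun b c => ?_, fun b c => ?_,
    fun b c => ?_, hη⟩
  · simp only [hm, mul_assoc]
  · rw [hm, h1, one_mul]
  · rw [hm, h1, mul_one]
  · simpa using hη b 1 c 1
  · simpa using hη 1 b 1 c
  · simp [hη]

end Statements
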